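/- Let Q be an m×m symmetric positive definite matrix, p ∈ ℝ^m nonzero, b ∈ ℝ, X := {x ∈ ℝ^m : pᵀx = b}, and A := Q⁻¹ − (1/(pᵀQ⁻¹p)) Q⁻¹p (Q⁻¹p)ᵀ. Then: (i) for every d ∈ ℝ^m, the unique minimizer of x ↦ (1/2)xᵀQx − dᵀx over X is x*(d) = A d + (b/(pᵀQ⁻¹p)) Q⁻¹p; (ii) for all d, c ∈ ℝ^m, the optimality gap L(d,c) := (1/2)x*(d)ᵀQx*(d) − cᵀx*(d) − min_{x∈X}((1/2)xᵀQx − cᵀx) equals (1/2)(d−c)ᵀA(d−c); (iii) consequently ℓ_SPO+(d,c) := L(c, 2d−c) = 2(c−d)ᵀA(c−d) = 4·L(d,c). -/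

import Mathlib

open Matrix

/-- The matrix `A = Q⁻¹ − (1/(pᵀQ⁻¹p)) Q⁻¹p (Q⁻¹p)ᵀ`. -/
noncomputable def Amat {m : ℕ} (Q : Matrix (Fin m) (Fin m) ℝ) (p : Fin m → ℝ) :
    Matrix (Fin m) (Fin m) ℝ :=
  Q⁻¹ - (1 / (p ⬝ᵥ (Q⁻¹ *ᵥ p))) • Matrix.vecMulVec (Q⁻¹ *ᵥ p) (Q⁻¹ *ᵥ p)

/-- The closed-form minimizer `x*(d) = A d + (b/(pᵀQ⁻¹p)) Q⁻¹ p` of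
`(1/2)xᵀQx − dᵀx` over `{x : pᵀx = b}`. -/
noncomputable def xstarQP {m : ℕ} (Q : Matrix (Fin m) (Fin m) ℝ) (p : Fin m → ℝ) (b : ℝ)
    (d : Fin m → ℝ) : Fin m → ℝ :=
  Amat Q p *ᵥ d + (b / (p ⬝ᵥ (Q⁻¹ *ᵥ p))) • (Q⁻¹ *ᵥ p)

/-- The optimality-gap (true) loss for the equality-constrained quadratic program. -/
noncomputable def LQP {m : ℕ} (Q : Matrix (Fin m) (Fin m) ℝ) (p : Fin m → ℝ) (b : ℝ)
    (d c : Fin m → ℝ) : ℝ :=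
  1 / 2 * (xstarQP Q p b d ⬝ᵥ (Q *ᵥ xstarQP Q p b d)) - c ⬝ᵥ xstarQP Q p b d
    - sInf ((fun x => 1 / 2 * (x ⬝ᵥ (Q *ᵥ x)) - c ⬝ᵥ x) '' {x : Fin m → ℝ | p ⬝ᵥ x = b})

/-! Since `Q *ᵥ x*(d) - d` is a multiple of `p`, the first-order term of the Taylor expansion of the
objective at `x*(d)` vanishes along the hyperplane `p ⬝ᵥ x = b`. Hence the objective at a feasible
`x` exceeds its value at `x*(d)` by exactly half the quadratic form of `Q` at `x - x*(d)`, a vector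
orthogonal to `p`. Moreover `x*(d) - x*(c) = A *ᵥ (d - c)` and `A Q A = A`, so the optimality gap is
half the quadratic form of `A` at `d - c`; replacing `(d, c)` by `(c, 2d - c)` multiplies `d - c`
by `-2`. -/

section QuadObjective

variable {n K : Type*} [Fintype n]

/-- The objective `(1/2)xᵀQx − dᵀx` of a quadratic program, as a function of `x`. -/
def quadObjective [Field K] (Q : Matrix n n K) (d x : n → K) : K :=
  1 / 2 * (x ⬝ᵥ (Q *ᵥ x)) - d ⬝ᵥ x

lemma dotProduct_mulVec_comm_of_isSymm [CommSemiring K] {Q : Matrix n n K} (hQ : Q.IsSymm)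
    (x y : n → K) : x ⬝ᵥ (Q *ᵥ y) = y ⬝ᵥ (Q *ᵥ x) := by
  simpa only [hQ.eq] using dotProduct_transpose_mulVec Q x y

lemma mulVec_inv_mulVec_of_isUnit [DecidableEq n] [CommRing K] {Q : Matrix n n K}
    (hQ : IsUnit Q) (v : n → K) : Q *ᵥ (Q⁻¹ *ᵥ v) = v := by
  rw [mulVec_mulVec, mul_nonsing_inv _ ((isUnit_iff_isUnit_det Q).mp hQ), one_mulVec]

lemma dotProduct_inv_mulVec_ne_zero [DecidableEq n] [CommRing K] {Q : Matrix n n K}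
    (hQ : IsUnit Q) {p : n → K} (hp : p ≠ 0)
    (haniso : ∀ v, p ⬝ᵥ v = 0 → v ≠ 0 → v ⬝ᵥ (Q *ᵥ v) ≠ 0) : p ⬝ᵥ (Q⁻¹ *ᵥ p) ≠ 0 := by
  intro horth
  have hne : Q⁻¹ *ᵥ p ≠ 0 := fun h => hp <| by
    rw [← mulVec_inv_mulVec_of_isUnit hQ p, h, mulVec_zero]
  apply haniso _ horth hne
  rw [mulVec_inv_mulVec_of_isUnit hQ, dotProduct_comm, horth]

lemma quadObjective_taylor [Field K] [NeZero (2 : K)] {Q : Matrix n n K} (hQ : Q.IsSymm)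
    (d x y : n → K) :
    quadObjective Q d x = quadObjective Q d y + (x - y) ⬝ᵥ (Q *ᵥ y - d)
      + 1 / 2 * ((x - y) ⬝ᵥ (Q *ᵥ (x - y))) := by
  have hxy : y ⬝ᵥ (Q *ᵥ x) = x ⬝ᵥ (Q *ᵥ y) := dotProduct_mulVec_comm_of_isSymm hQ y x
  simp only [quadObjective, mulVec_sub, dotProduct_sub, sub_dotProduct, hxy, dotProduct_comm _ d]
  field_simp
  ring

lemma quadObjective_eq_add_of_mulVec_eq [Field K] [NeZero (2 : K)] {Q : Matrix n n K}
    (hQ : Q.IsSymm) {p d x y : n → K} {t : K} (hy : Q *ᵥ y = d + t • p)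
    (hxy : p ⬝ᵥ x = p ⬝ᵥ y) :
    quadObjective Q d x
      = quadObjective Q d y + 1 / 2 * ((x - y) ⬝ᵥ (Q *ᵥ (x - y))) := by
  have hstat : (x - y) ⬝ᵥ (Q *ᵥ y - d) = 0 := by
    rw [hy, add_sub_cancel_left, dotProduct_smul, dotProduct_comm, dotProduct_sub, hxy, sub_self,
      smul_zero]
  rw [quadObjective_taylor hQ d x y, hstat, add_zero]

variable [Field K] [LinearOrder K] [IsStrictOrderedRing K] {Q : Matrix n n K} {p d y : n → K}
  {t : K}

lemma quadObjective_lt_of_mulVec_eq (hQ : Q.IsSymm)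
    (hpos : ∀ v, p ⬝ᵥ v = 0 → v ≠ 0 → 0 < v ⬝ᵥ (Q *ᵥ v)) (hy : Q *ᵥ y = d + t • p)
    {x : n → K} (hxy : p ⬝ᵥ x = p ⬝ᵥ y) (hne : x ≠ y) :
    quadObjective Q d y < quadObjective Q d x := by
  have hgap : 0 < (x - y) ⬝ᵥ (Q *ᵥ (x - y)) :=
    hpos _ (by rw [dotProduct_sub, hxy, sub_self]) (sub_ne_zero.mpr hne)
  rw [quadObjective_eq_add_of_mulVec_eq hQ hy hxy]
  exact lt_add_of_pos_right _ (by positivity)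

lemma isLeast_quadObjective_of_mulVec_eq (hQ : Q.IsSymm)
    (hnonneg : ∀ v, p ⬝ᵥ v = 0 → 0 ≤ v ⬝ᵥ (Q *ᵥ v)) (hy : Q *ᵥ y = d + t • p) :
    IsLeast (quadObjective Q d '' {x | p ⬝ᵥ x = p ⬝ᵥ y}) (quadObjective Q d y) := by
  refine ⟨⟨y, rfl, rfl⟩, ?_⟩
  rintro _ ⟨x, hxy : p ⬝ᵥ x = p ⬝ᵥ y, rfl⟩
  have hgap : 0 ≤ (x - y) ⬝ᵥ (Q *ᵥ (x - y)) :=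
    hnonneg _ (by rw [dotProduct_sub, hxy, sub_self])
  rw [quadObjective_eq_add_of_mulVec_eq hQ hy hxy]
  exact le_add_of_nonneg_right (by positivity)

end QuadObjective

section ClosedForm

variable {m : ℕ} {Q : Matrix (Fin m) (Fin m) ℝ} {p : Fin m → ℝ}

lemma amat_mulVec (Q : Matrix (Fin m) (Fin m) ℝ) (p v : Fin m → ℝ) :
    Amat Q p *ᵥ v
      = Q⁻¹ *ᵥ v - ((Q⁻¹ *ᵥ p) ⬝ᵥ v / (p ⬝ᵥ (Q⁻¹ *ᵥ p))) • (Q⁻¹ *ᵥ p) := by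
  rw [Amat, sub_mulVec, smul_mulVec, vecMulVec_mulVec, op_smul_eq_smul, smul_smul,
    one_div_mul_eq_div]

lemma dotProduct_amat_mulVec (hQ : Q.IsSymm) (hp : p ⬝ᵥ (Q⁻¹ *ᵥ p) ≠ 0) (v : Fin m → ℝ) :
    p ⬝ᵥ (Amat Q p *ᵥ v) = 0 := by
  rw [amat_mulVec, dotProduct_sub, dotProduct_smul, smul_eq_mul, div_mul_cancel₀ _ hp,
    dotProduct_mulVec_comm_of_isSymm hQ.inv, dotProduct_comm v, sub_self]

lemma mulVec_amat_mulVec (hQ : IsUnit Q) (p v : Fin m → ℝ) :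
    Q *ᵥ (Amat Q p *ᵥ v) = v - ((Q⁻¹ *ᵥ p) ⬝ᵥ v / (p ⬝ᵥ (Q⁻¹ *ᵥ p))) • p := by
  simp only [amat_mulVec, mulVec_sub, mulVec_smul, mulVec_inv_mulVec_of_isUnit hQ]

lemma amat_mulVec_dotProduct_mulVec_amat_mulVec (hQ : Q.IsSymm) (hunit : IsUnit Q)
    (hp : p ⬝ᵥ (Q⁻¹ *ᵥ p) ≠ 0) (v : Fin m → ℝ) :
    (Amat Q p *ᵥ v) ⬝ᵥ (Q *ᵥ (Amat Q p *ᵥ v)) = v ⬝ᵥ (Amat Q p *ᵥ v) := by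
  rw [mulVec_amat_mulVec hunit, dotProduct_comm, sub_dotProduct, smul_dotProduct,
    dotProduct_amat_mulVec hQ hp, smul_zero, sub_zero]

lemma dotProduct_xstarQP (hQ : Q.IsSymm) (hp : p ⬝ᵥ (Q⁻¹ *ᵥ p) ≠ 0) (b : ℝ)
    (d : Fin m → ℝ) : p ⬝ᵥ xstarQP Q p b d = b := by
  rw [xstarQP, dotProduct_add, dotProduct_amat_mulVec hQ hp, dotProduct_smul, smul_eq_mul,
    div_mul_cancel₀ _ hp, zero_add]

lemma mulVec_xstarQP (hQ : IsUnit Q) (p : Fin m → ℝ) (b : ℝ) (d : Fin m → ℝ) :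
    Q *ᵥ xstarQP Q p b d = d + ((b - (Q⁻¹ *ᵥ p) ⬝ᵥ d) / (p ⬝ᵥ (Q⁻¹ *ᵥ p))) • p := by
  rw [xstarQP, mulVec_add, mulVec_amat_mulVec hQ, mulVec_smul, mulVec_inv_mulVec_of_isUnit hQ,
    sub_div]
  module

lemma xstarQP_sub_xstarQP (Q : Matrix (Fin m) (Fin m) ℝ) (p : Fin m → ℝ) (b : ℝ)
    (d c : Fin m → ℝ) : xstarQP Q p b d - xstarQP Q p b c = Amat Q p *ᵥ (d - c) := by
  rw [xstarQP, xstarQP, add_sub_add_right_eq_sub, mulVec_sub]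

lemma lqp_eq_dotProduct_amat_mulVec (hQ : Q.IsSymm) (hunit : IsUnit Q)
    (hp : p ⬝ᵥ (Q⁻¹ *ᵥ p) ≠ 0) (hnonneg : ∀ v, p ⬝ᵥ v = 0 → 0 ≤ v ⬝ᵥ (Q *ᵥ v)) (b : ℝ)
    (d c : Fin m → ℝ) :
    LQP Q p b d c = 1 / 2 * ((d - c) ⬝ᵥ (Amat Q p *ᵥ (d - c))) := by
  have hfeas := dotProduct_xstarQP hQ hp b
  have hmin : IsLeast (quadObjective Q c '' {x | p ⬝ᵥ x = b})
      (quadObjective Q c (xstarQP Q p b c)) := by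
    simpa only [hfeas] using
      isLeast_quadObjective_of_mulVec_eq hQ hnonneg (mulVec_xstarQP hunit p b c)
  calc LQP Q p b d c
      = quadObjective Q c (xstarQP Q p b d) - sInf (quadObjective Q c '' {x | p ⬝ᵥ x = b}) := rfl
    _ = quadObjective Q c (xstarQP Q p b d) - quadObjective Q c (xstarQP Q p b c) := by
      rw [hmin.csInf_eq]
    _ = 1 / 2 * ((Amat Q p *ᵥ (d - c)) ⬝ᵥ (Q *ᵥ (Amat Q p *ᵥ (d - c)))) := by
      rw [quadObjective_eq_add_of_mulVec_eq hQ (mulVec_xstarQP hunit p b c)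
        ((hfeas d).trans (hfeas c).symm), add_sub_cancel_left, xstarQP_sub_xstarQP]
    _ = 1 / 2 * ((d - c) ⬝ᵥ (Amat Q p *ᵥ (d - c))) := by
      rw [amat_mulVec_dotProduct_mulVec_amat_mulVec hQ hunit hp]

end ClosedForm

theorem statement14_general {m : ℕ} (Q : Matrix (Fin m) (Fin m) ℝ) (hQ : Q.IsSymm)
    (hunit : IsUnit Q) (p : Fin m → ℝ) (hp : p ≠ 0)
    (hpos : ∀ v, p ⬝ᵥ v = 0 → v ≠ 0 → 0 < v ⬝ᵥ (Q *ᵥ v)) (b : ℝ) :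
    (∀ d : Fin m → ℝ,
      p ⬝ᵥ xstarQP Q p b d = b ∧
      ∀ x : Fin m → ℝ, p ⬝ᵥ x = b → x ≠ xstarQP Q p b d →
        1 / 2 * (xstarQP Q p b d ⬝ᵥ (Q *ᵥ xstarQP Q p b d)) - d ⬝ᵥ xstarQP Q p b d
          < 1 / 2 * (x ⬝ᵥ (Q *ᵥ x)) - d ⬝ᵥ x) ∧
    (∀ d c : Fin m → ℝ,
      LQP Q p b d c = 1 / 2 * ((d - c) ⬝ᵥ (Amat Q p *ᵥ (d - c)))) ∧
    (∀ d c : Fin m → ℝ,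
      LQP Q p b c ((2:ℝ) • d - c) = 2 * ((c - d) ⬝ᵥ (Amat Q p *ᵥ (c - d))) ∧
      LQP Q p b c ((2:ℝ) • d - c) = 4 * LQP Q p b d c) := by
  have hp_inv : p ⬝ᵥ (Q⁻¹ *ᵥ p) ≠ 0 :=
    dotProduct_inv_mulVec_ne_zero hunit hp fun v hv hv₀ => (hpos v hv hv₀).ne'
  have hnonneg : ∀ v, p ⬝ᵥ v = 0 → 0 ≤ v ⬝ᵥ (Q *ᵥ v) := by
    intro v hv
    obtain rfl | hv₀ := eq_or_ne v 0
    · rw [zero_dotProduct]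
    · exact (hpos v hv hv₀).le
  have hfeas := dotProduct_xstarQP hQ hp_inv b
  have hgap := lqp_eq_dotProduct_amat_mulVec hQ hunit hp_inv hnonneg b
  refine ⟨fun d => ⟨hfeas d, fun x hx hne => ?_⟩, hgap, fun d c => ?_⟩
  · exact quadObjective_lt_of_mulVec_eq hQ hpos (mulVec_xstarQP hunit p b d)
      (hx.trans (hfeas d).symm) hne
  · have hspo : c - ((2 : ℝ) • d - c) = (2 : ℝ) • (c - d) := by module
    rw [hgap, hgap, hspo, ← neg_sub c d]
    simp only [mulVec_smul, mulVec_neg, dotProduct_smul, smul_dotProduct, neg_dotProduct,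
      dotProduct_neg, smul_eq_mul]
    constructor <;> ring

/-- for the mean-variance portfolio problem with a single equality
constraint, (i) `x*(d)` is the unique minimizer of `(1/2)xᵀQx − dᵀx` over `{x : pᵀx = b}`;
(ii) `L(d,c) = (1/2)(d−c)ᵀA(d−c)`; (iii) the SPO+ loss `L(c, 2d−c)` equals
`2(c−d)ᵀA(c−d) = 4 L(d,c)`. -/
theorem statement14 {m : ℕ} (Q : Matrix (Fin m) (Fin m) ℝ) (hQ : Q.PosDef)
    (p : Fin m → ℝ) (hp : p ≠ 0) (b : ℝ) :
    (∀ d : Fin m → ℝ,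
      p ⬝ᵥ xstarQP Q p b d = b ∧
      ∀ x : Fin m → ℝ, p ⬝ᵥ x = b → x ≠ xstarQP Q p b d →
        1 / 2 * (xstarQP Q p b d ⬝ᵥ (Q *ᵥ xstarQP Q p b d)) - d ⬝ᵥ xstarQP Q p b d
          < 1 / 2 * (x ⬝ᵥ (Q *ᵥ x)) - d ⬝ᵥ x) ∧
    (∀ d c : Fin m → ℝ,
      LQP Q p b d c = 1 / 2 * ((d - c) ⬝ᵥ (Amat Q p *ᵥ (d - c)))) ∧
    (∀ d c : Fin m → ℝ,
      LQP Q p b c ((2:ℝ) • d - c) = 2 * ((c - d) ⬝ᵥ (Amat Q p *ᵥ (c - d))) ∧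
      LQP Q p b c ((2:ℝ) • d - c) = 4 * LQP Q p b d c) := by
  refine statement14_general Q (isHermitian_iff_isSymm.mp hQ.isHermitian) hQ.isUnit p hp ?_ b
  exact fun v _ hv => by simpa only [star_trivial] using hQ.dotProduct_mulVec_pos hv
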